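/- arXiv:cs/0703155 — 2 statements merged into one kernel-verified Lean document; each statement's English description precedes it below -/
import Mathlib

section
/- Suppose the ε-NFA M' extends the ε-NFA M by bypass ε-edges. Then for every word α accepted by M' there exists a word α' accepted by M such that α' R* α. (This is the paper's Lemma 1, 'no new information is added': any access pattern accepted after adding the bypass ε-edges is a reduced version of some access pattern accepted before.) -/
/-- The four-element alphabet: selectors `c0`, `c1` and barred symbols `b0, b1`. -/
inductive ASym : Type
  | c0 | c1 | b0 | b1
  deriving DecidableEq

open ASym

/-- One-step cancellation relation on words: `𝟬̄𝟬 → ε` and `𝟭̄𝟭 → ε`. -/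
def Cancel (w w' : List ASym) : Prop :=
  ∃ u v : List ASym,
    (w = u ++ [b0, c0] ++ v ∧ w' = u ++ v) ∨
    (w = u ++ [b1, c1] ++ v ∧ w' = u ++ v)

/-- `(q', q'')` is a bypass pair in `M`. -/
def BypassPair {σ : Type*} (M : εNFA ASym σ) (q' q'' : σ) : Prop :=
  ∃ q : σ,
    (q ∈ M.step q' (some b0) ∧ q'' ∈ M.step q (some c0)) ∨
    (q ∈ M.step q' (some b1) ∧ q'' ∈ M.step q (some c1))

/-- `M'` extends `M` by bypass ε-edges. -/
def ExtendsByBypass {σ : Type*} (M M' : εNFA ASym σ) : Prop :=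
  M'.start = M.start ∧ M'.accept = M.accept ∧
  (∀ q a, M'.step q (some a) = M.step q (some a)) ∧
  (∀ q, M.step q none ⊆ M'.step q none) ∧
  (∀ q' q'', q'' ∈ M'.step q' none → q'' ∉ M.step q' none → BypassPair M q' q'')

/-- The ε-NFA obtained from `M` by adding a single ε-transition from `q'` to `q''`. -/
def addEps {σ : Type*} (M : εNFA ASym σ) (q' q'' : σ) : εNFA ASym σ where
  step := fun q a => M.step q a ∪ {p | q = q' ∧ a = none ∧ p = q''}
  start := M.start
  accept := M.accept

/-- `M` is bypass-closed: adding the ε-edge of any bypass pair does not change the language. -/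
def BypassClosed {σ : Type*} (M : εNFA ASym σ) : Prop :=
  ∀ q' q'', BypassPair M q' q'' → (addEps M q' q'').accepts = M.accepts

/-- The barred-removal of `M`: delete all edges labeled `b0` or `b1`. -/
def barredRemoval {σ : Type*} (M : εNFA ASym σ) : εNFA ASym σ where
  step := fun q a =>
    match a with
    | none => M.step q none
    | some c0 => M.step q (some c0)
    | some c1 => M.step q (some c1)
    | some b0 => ∅
    | some b1 => ∅
  start := M.start
  accept := M.accept

/-!
Every transition of `M'` is imitated by a path of `M` between the same states whose word cancels to
the label of the transition: a new `ε`-edge is imitated by the two transitions of its bypass pair,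
which read `b0 c0` or `b1 c1`. Since cancellation is compatible with concatenation, imitating an
accepting path of `M'` transition by transition gives an accepting path of `M` whose word reduces to
the original one.
-/

section Simulation

variable {α β σ : Type*} {M : εNFA α σ} {N : εNFA β σ} {r : List α → List β → Prop}

theorem exists_isPath_of_step_simulation (r_nil : r [] [])
    (r_append : ∀ {x x' y y'}, r x x' → r y y' → r (x ++ y) (x' ++ y'))
    (simulate : ∀ {s t a}, t ∈ N.step s a → ∃ x, M.IsPath s t x ∧ r x.reduceOption a.toList)
    {s t : σ} {x : List (Option β)} (hx : N.IsPath s t x) :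
    ∃ y, M.IsPath s t y ∧ r y.reduceOption x.reduceOption := by
  induction hx with
  | nil s => exact ⟨[], .nil s, r_nil⟩
  | cons t s u a x hst _ ih =>
    obtain ⟨y, hy, hyx⟩ := ih
    obtain ⟨z, hz, hza⟩ := simulate hst
    refine ⟨z ++ y, M.isPath_append.2 ⟨t, hz, hy⟩, ?_⟩
    rw [← List.singleton_append, List.reduceOption_append, List.reduceOption_append,
      List.reduceOption_singleton]
    exact r_append hza hyx

theorem exists_mem_accepts_of_step_simulation (r_nil : r [] [])
    (r_append : ∀ {x x' y y'}, r x x' → r y y' → r (x ++ y) (x' ++ y'))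
    (start_subset : N.start ⊆ M.start) (accept_subset : N.accept ⊆ M.accept)
    (simulate : ∀ {s t a}, t ∈ N.step s a → ∃ x, M.IsPath s t x ∧ r x.reduceOption a.toList)
    {w : List β} (hw : w ∈ N.accepts) :
    ∃ w' ∈ M.accepts, r w' w := by
  obtain ⟨s, t, x, hs, ht, rfl, hx⟩ := N.mem_accepts_iff_exists_path.1 hw
  obtain ⟨y, hy, hyx⟩ := exists_isPath_of_step_simulation r_nil r_append simulate hx
  exact ⟨y.reduceOption, M.mem_accepts_iff_exists_path.2
    ⟨s, t, y, start_subset hs, accept_subset ht, rfl, hy⟩, hyx⟩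

end Simulation

theorem reflTransGen_append {α : Type*} {r : List α → List α → Prop}
    (append_left : ∀ u {w w'}, r w w' → r (u ++ w) (u ++ w'))
    (append_right : ∀ v {w w'}, r w w' → r (w ++ v) (w' ++ v))
    {x x' y y' : List α} (hx : Relation.ReflTransGen r x x') (hy : Relation.ReflTransGen r y y') :
    Relation.ReflTransGen r (x ++ y) (x' ++ y') :=
  (Relation.ReflTransGen.lift (· ++ y) (fun _ _ ↦ append_right y) _ _ hx).trans
    (Relation.ReflTransGen.lift (x' ++ ·) (fun _ _ ↦ append_left x') _ _ hy)

namespace Cancel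

theorem b0_c0 : Cancel [b0, c0] [] :=
  ⟨[], [], .inl ⟨rfl, rfl⟩⟩

theorem b1_c1 : Cancel [b1, c1] [] :=
  ⟨[], [], .inr ⟨rfl, rfl⟩⟩

theorem append_left (x : List ASym) {w w' : List ASym} (h : Cancel w w') :
    Cancel (x ++ w) (x ++ w') := by
  obtain ⟨u, v, h⟩ := h
  refine ⟨x ++ u, v, h.imp ?_ ?_⟩ <;> rintro ⟨rfl, rfl⟩ <;> simp only [List.append_assoc, and_self]

theorem append_right (x : List ASym) {w w' : List ASym} (h : Cancel w w') :
    Cancel (w ++ x) (w' ++ x) := by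
  obtain ⟨u, v, h⟩ := h
  refine ⟨u, v ++ x, h.imp ?_ ?_⟩ <;> rintro ⟨rfl, rfl⟩ <;> simp only [List.append_assoc, and_self]

end Cancel

section Bypass

variable {σ : Type*} {M M' : εNFA ASym σ} {s t : σ}

theorem BypassPair.exists_isPath_cancel_nil (h : BypassPair M s t) :
    ∃ x, M.IsPath s t x ∧ Cancel x.reduceOption [] := by
  obtain ⟨q, ⟨hsq, hqt⟩ | ⟨hsq, hqt⟩⟩ := h
  · exact ⟨[some b0, some c0], .cons q s t _ _ hsq (.singleton M hqt), Cancel.b0_c0⟩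
  · exact ⟨[some b1, some c1], .cons q s t _ _ hsq (.singleton M hqt), Cancel.b1_c1⟩

theorem ExtendsByBypass.exists_isPath_of_mem_step (h : ExtendsByBypass M M') {a : Option ASym}
    (ht : t ∈ M'.step s a) :
    ∃ x, M.IsPath s t x ∧ Relation.ReflTransGen Cancel x.reduceOption a.toList := by
  obtain ⟨-, -, step_some, -, bypassPair⟩ := h
  by_cases hM : t ∈ M.step s a
  · exact ⟨[a], .singleton M hM, by rw [List.reduceOption_singleton]⟩
  · cases a with
    | some a => exact absurd (step_some s a ▸ ht) hM
    | none =>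
      obtain ⟨x, hx, hcancel⟩ := (bypassPair s t ht hM).exists_isPath_cancel_nil
      exact ⟨x, hx, .single hcancel⟩

end Bypass

/-- Lemma 1: adding bypass ε-edges adds no new information. -/
theorem accepts_extendsByBypass_reduces {σ : Type*} (M M' : εNFA ASym σ)
    (h : ExtendsByBypass M M') (α : List ASym) (hα : α ∈ M'.accepts) :
    ∃ α' ∈ M.accepts, Relation.ReflTransGen Cancel α' α := by
  exact exists_mem_accepts_of_step_simulation .refl
    (reflTransGen_append Cancel.append_left Cancel.append_right)
    h.1.subset h.2.1.subset h.exists_isPath_of_mem_step hα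
end

section
/- Let M₀, M₁, …, M_m be a finite sequence of ε-NFAs over Σ (on a common state type) such that for each i < m, M_{i+1} extends M_i by bypass ε-edges. Then for every word α accepted by M_m there exists a word α' accepted by M₀ such that α' R* α. (This is the paper's Corollary to Lemma 1, proved by induction on m.) -/
open ASym

/-!
A bypass edge `q' → q''` shortcuts a two-edge path of the smaller automaton whose label cancels to
the empty word. Replacing every such edge along an accepting path of the larger automaton by the
path it shortcuts keeps the endpoints and inserts cancelling pairs into the word read. The same
replacement works whenever every transition of one automaton can be replaced by a path of another
whose label is related to that of the transition by a preorder compatible with concatenation.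
-/

/-- `M` simulates `M'` modulo the relation `r` on words: start and accept states of `M'` are such in
`M`, and every transition of `M'` can be replaced by a path of `M` whose word is related by `r` to
the label of the transition, where the label of an ε-move is the empty word. This is the property of
bypass extensions that lifts to accepted words. -/
structure SimulatesModulo {α σ : Type*} (r : List α → List α → Prop) (M M' : εNFA α σ) : Prop where
  start_subset : M'.start ⊆ M.start
  accept_subset : M'.accept ⊆ M.accept
  exists_isPath_of_mem_step {s t : σ} {a : Option α} :
    t ∈ M'.step s a → ∃ x, M.IsPath s t x ∧ r x.reduceOption a.toList

section Simulation

variable {α σ : Type*} {r : List α → List α → Prop} {M M' : εNFA α σ}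

theorem SimulatesModulo.exists_isPath [Std.Refl r]
    (h_append : ∀ {u u' v v' : List α}, r u u' → r v v' → r (u ++ v) (u' ++ v'))
    (h : SimulatesModulo r M M') {s t : σ} {x : List (Option α)} (hx : M'.IsPath s t x) :
    ∃ y, M.IsPath s t y ∧ r y.reduceOption x.reduceOption := by
  induction hx with
  | nil s => exact ⟨[], .nil s, refl_of r _⟩
  | cons t s u a x hstep _ ih =>
    obtain ⟨y, hy, hyx⟩ := ih
    obtain ⟨z, hz, hza⟩ := h.exists_isPath_of_mem_step hstep
    refine ⟨z ++ y, M.isPath_append.mpr ⟨t, hz, hy⟩, ?_⟩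
    rw [← List.singleton_append, List.reduceOption_append, List.reduceOption_append,
      List.reduceOption_singleton]
    exact h_append hza hyx

theorem SimulatesModulo.exists_mem_accepts [Std.Refl r]
    (h_append : ∀ {u u' v v' : List α}, r u u' → r v v' → r (u ++ v) (u' ++ v'))
    (h : SimulatesModulo r M M') {w : List α} (hw : w ∈ M'.accepts) :
    ∃ w' ∈ M.accepts, r w' w := by
  obtain ⟨s, t, x, hs, ht, rfl, hx⟩ := M'.mem_accepts_iff_exists_path.mp hw
  obtain ⟨y, hy, hyx⟩ := h.exists_isPath h_append hx
  exact ⟨y.reduceOption, M.mem_accepts_iff_exists_path.mpr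
    ⟨s, t, y, h.start_subset hs, h.accept_subset ht, rfl, hy⟩, hyx⟩

theorem accepts_chain_extendsByBypass_reduces_general [Std.Refl r] [IsTrans (List α) r]
    (h_append : ∀ {u u' v v' : List α}, r u u' → r v v' → r (u ++ v) (u' ++ v'))
    (m : ℕ) (M : ℕ → εNFA α σ) (h : ∀ i < m, SimulatesModulo r (M i) (M (i + 1)))
    {w : List α} (hw : w ∈ (M m).accepts) :
    ∃ w' ∈ (M 0).accepts, r w' w := by
  induction m generalizing w with
  | zero => exact ⟨w, hw, refl_of r w⟩
  | succ m ih =>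
    obtain ⟨v, hv, hvw⟩ := (h m m.lt_succ_self).exists_mem_accepts h_append hw
    obtain ⟨u, hu, huv⟩ := ih (fun i hi ↦ h i (Nat.lt_succ_of_lt hi)) hv
    exact ⟨u, hu, trans_of r huv hvw⟩

end Simulation

theorem Cancel.append_left_s2 {w w' : List ASym} (h : Cancel w w') (z : List ASym) :
    Cancel (z ++ w) (z ++ w') := by
  obtain ⟨u, v, ⟨rfl, rfl⟩ | ⟨rfl, rfl⟩⟩ := h
  · exact ⟨z ++ u, v, .inl (by simp only [List.append_assoc, and_self])⟩
  · exact ⟨z ++ u, v, .inr (by simp only [List.append_assoc, and_self])⟩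

theorem Cancel.append_right_s2 {w w' : List ASym} (h : Cancel w w') (z : List ASym) :
    Cancel (w ++ z) (w' ++ z) := by
  obtain ⟨u, v, ⟨rfl, rfl⟩ | ⟨rfl, rfl⟩⟩ := h
  · exact ⟨u, v ++ z, .inl (by simp only [List.append_assoc, and_self])⟩
  · exact ⟨u, v ++ z, .inr (by simp only [List.append_assoc, and_self])⟩

theorem reflTransGen_cancel_append {u u' v v' : List ASym}
    (hu : Relation.ReflTransGen Cancel u u') (hv : Relation.ReflTransGen Cancel v v') :
    Relation.ReflTransGen Cancel (u ++ v) (u' ++ v') :=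
  (hu.lift (· ++ v) fun _ _ h ↦ h.append_right_s2 v).trans
    (hv.lift (u' ++ ·) fun _ _ h ↦ h.append_left_s2 u')

section Bypass

variable {σ : Type*} {M M' : εNFA ASym σ}

theorem BypassPair.exists_isPath {q' q'' : σ} (h : BypassPair M q' q'') :
    ∃ x, M.IsPath q' q'' x ∧ Cancel x.reduceOption [] := by
  obtain ⟨q, ⟨hb, hc⟩ | ⟨hb, hc⟩⟩ := h
  · exact ⟨[some b0, some c0], .cons _ _ _ _ _ hb (M.isPath_singleton.mpr hc),
      [], [], .inl ⟨rfl, rfl⟩⟩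
  · exact ⟨[some b1, some c1], .cons _ _ _ _ _ hb (M.isPath_singleton.mpr hc),
      [], [], .inr ⟨rfl, rfl⟩⟩

theorem ExtendsByBypass.simulatesModulo (h : ExtendsByBypass M M') :
    SimulatesModulo (Relation.ReflTransGen Cancel) M M' := by
  obtain ⟨hstart, haccept, hletter, -, hbypass⟩ := h
  refine ⟨hstart.subset, haccept.subset, fun {s t a} hstep ↦ ?_⟩
  by_cases hM : t ∈ M.step s a
  · exact ⟨[a], M.isPath_singleton.mpr hM, by rw [List.reduceOption_singleton]⟩
  · cases a with
    | some a => exact absurd (hletter s a ▸ hstep) hM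
    | none =>
      obtain ⟨x, hx, hcancel⟩ := (hbypass s t hstep hM).exists_isPath
      exact ⟨x, hx, .single hcancel⟩

end Bypass

/-- Corollary of Lemma 1: along a chain of bypass extensions, every accepted word of the
last automaton is a reduct of a word accepted by the first. -/
theorem accepts_chain_extendsByBypass_reduces {σ : Type*} (m : ℕ) (M : ℕ → εNFA ASym σ)
    (h : ∀ i < m, ExtendsByBypass (M i) (M (i + 1)))
    (α : List ASym) (hα : α ∈ (M m).accepts) :
    ∃ α' ∈ (M 0).accepts, Relation.ReflTransGen Cancel α' α :=
  accepts_chain_extendsByBypass_reduces_general reflTransGen_cancel_append m M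
    (fun i hi ↦ (h i hi).simulatesModulo) hα
end
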